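/- arXiv:2102.07069 — 2 statements merged into one kernel-verified Lean document; each statement's English description precedes it below -/
import Mathlib

section
/- Let (E, 𝓑) be a measurable space, κ₁ and κ₂ Markov kernels from E to E, and π a probability measure on E that is invariant for κ₂, i.e. ∫ κ₂(y, A) π(dy) = π(A) for all A ∈ 𝓑. Let κ₁⊚κ₂ denote the composed kernel (κ₁⊚κ₂)(x, A) = ∫ κ₂(y, A) κ₁(x, dy). Then sup_{x∈E} ‖(κ₁⊚κ₂)(x,·) − π‖_Var ≤ (sup_{x∈E} ‖κ₁(x,·) − π‖_Var) · (sup_{y∈E} ‖κ₂(y,·) − π‖_Var). -/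
/-!
Total variation is dual to bounded functions: `‖μ - ν‖_Var` is the maximum of `∫ f dμ - ∫ f dν` over
measurable `|f| ≤ 1`, attained at the sign function `f` of a Hahn decomposition. Testing `μκ - νκ`
against such an `f` amounts to testing `μ - ν` against `y ↦ ∫ f dκ(y)`. If `μ` and `ν` have the same
mass, a constant may be subtracted from this function; with the constant `∫ f dρ` it becomes
`∫ f dκ(y) - ∫ f dρ`, which is bounded by `sup_y ‖κ(y) - ρ‖_Var`. Apply this to `κ = κ₂`,
`μ = κ₁(x)` and `ν = ρ = π`, where `πκ₂ = π`.
-/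

open MeasureTheory ProbabilityTheory ENNReal

/-- The total variation norm `‖μ - ν‖_Var` of the difference of two finite measures. -/
noncomputable def tvDist {E : Type*} [MeasurableSpace E]
    (μ ν : Measure E) [IsFiniteMeasure μ] [IsFiniteMeasure ν] : ℝ≥0∞ :=
  (μ.toSignedMeasure - ν.toSignedMeasure).totalVariation Set.univ

section TotalVariation

variable {E : Type*} [MeasurableSpace E] (μ ν : Measure E) [IsFiniteMeasure μ] [IsFiniteMeasure ν]

lemma tvDist_eq_sub_add_sub : tvDist μ ν = (μ - ν) Set.univ + (ν - μ) Set.univ := by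
  rw [tvDist, SignedMeasure.totalVariation, Measure.toJordanDecomposition_toSignedMeasure_sub]
  rfl

lemma tvDist_ne_top : tvDist μ ν ≠ ∞ :=
  measure_ne_top _ _

lemma tvDist_le_univ_add_univ : tvDist μ ν ≤ μ Set.univ + ν Set.univ := by
  rw [tvDist_eq_sub_add_sub]
  exact add_le_add (Measure.sub_le _) (Measure.sub_le _)

lemma toReal_tvDist : (tvDist μ ν).toReal = (μ - ν).real Set.univ + (ν - μ).real Set.univ := by
  rw [tvDist_eq_sub_add_sub, ENNReal.toReal_add (by finiteness) (by finiteness)]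
  rfl

lemma measure_add_sub_comm : μ + (ν - μ) = ν + (μ - ν) := by
  have hsub : μ.toSignedMeasure - ν.toSignedMeasure =
      (μ - ν).toSignedMeasure - (ν - μ).toSignedMeasure :=
    Measure.sub_toSignedMeasure_eq_toSignedMeasure_sub
  rw [← Measure.toSignedMeasure_eq_toSignedMeasure_iff, Measure.toSignedMeasure_add,
    Measure.toSignedMeasure_add, add_comm ν.toSignedMeasure]
  exact sub_eq_sub_iff_add_eq_add.mp hsub

variable {μ ν} {G : Type*} [NormedAddCommGroup G] [NormedSpace ℝ G]

lemma integral_sub_integral_eq_integral_measure_sub {f : E → G}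
    (hμ : Integrable f μ) (hν : Integrable f ν) :
    ∫ x, f x ∂μ - ∫ x, f x ∂ν = ∫ x, f x ∂(μ - ν) - ∫ x, f x ∂(ν - μ) := by
  have hadd : ∫ x, f x ∂(μ + (ν - μ)) = ∫ x, f x ∂(ν + (μ - ν)) := by
    rw [measure_add_sub_comm]
  rw [integral_add_measure hμ (hν.mono_measure Measure.sub_le),
    integral_add_measure hν (hμ.mono_measure Measure.sub_le), add_comm (∫ x, f x ∂ν)] at hadd
  exact sub_eq_sub_iff_add_eq_add.mpr hadd

lemma norm_integral_sub_integral_le_mul_tvDist {f : E → G} {C : ℝ}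
    (hμ : Integrable f μ) (hν : Integrable f ν) (hf : ∀ x, ‖f x‖ ≤ C) :
    ‖∫ x, f x ∂μ - ∫ x, f x ∂ν‖ ≤ C * (tvDist μ ν).toReal := by
  have norm_integral_le (ρ : Measure E) [IsFiniteMeasure ρ] : ‖∫ x, f x ∂ρ‖ ≤ C * ρ.real Set.univ :=
    norm_integral_le_of_norm_le_const (ae_of_all _ hf)
  calc ‖∫ x, f x ∂μ - ∫ x, f x ∂ν‖
      = ‖∫ x, f x ∂(μ - ν) - ∫ x, f x ∂(ν - μ)‖ := by
        rw [integral_sub_integral_eq_integral_measure_sub hμ hν]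
    _ ≤ C * (μ - ν).real Set.univ + C * (ν - μ).real Set.univ :=
        (norm_sub_le _ _).trans (add_le_add (norm_integral_le _) (norm_integral_le _))
    _ = C * (tvDist μ ν).toReal := by rw [toReal_tvDist, mul_add]

variable (μ ν)

lemma exists_integral_sub_integral_eq_tvDist :
    ∃ f : E → ℝ, Measurable f ∧ (∀ x, ‖f x‖ ≤ 1) ∧
      ∫ x, f x ∂μ - ∫ x, f x ∂ν = (tvDist μ ν).toReal := by
  classical
  obtain ⟨s, hs⟩ := exists_isHahnDecomposition μ ν
  let f : E → ℝ := s.piecewise (fun _ ↦ -1) (fun _ ↦ 1)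
  have hf_meas : Measurable f := measurable_const.piecewise hs.measurableSet measurable_const
  have hf_norm (x : E) : ‖f x‖ ≤ 1 := by
    by_cases hx : x ∈ s <;> simp [f, hx]
  have hf_int (ρ : Measure E) [IsFiniteMeasure ρ] : Integrable f ρ :=
    .of_bound hf_meas.aestronglyMeasurable 1 (ae_of_all _ hf_norm)
  have hf_pos : f =ᵐ[μ - ν] fun _ ↦ 1 := by
    have hs_null := Measure.sub_apply_eq_zero_of_isHahnDecomposition hs
    filter_upwards [measure_eq_zero_iff_ae_notMem.mp hs_null] with x hx
    exact Set.piecewise_eq_of_notMem _ _ _ hx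
  have hf_neg : f =ᵐ[ν - μ] fun _ ↦ -1 := by
    have hs_null := Measure.sub_apply_eq_zero_of_isHahnDecomposition hs.compl
    filter_upwards [measure_eq_zero_iff_ae_notMem.mp hs_null] with x hx
    exact Set.piecewise_eq_of_mem _ _ _ (Set.notMem_compl_iff.mp hx)
  refine ⟨f, hf_meas, hf_norm, ?_⟩
  rw [integral_sub_integral_eq_integral_measure_sub (hf_int μ) (hf_int ν),
    integral_congr_ae hf_pos, integral_congr_ae hf_neg, toReal_tvDist]
  simp

end TotalVariation

section Kernel

variable {X E F : Type*} [MeasurableSpace X] [MeasurableSpace E] [MeasurableSpace F]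

lemma iSup_tvDist_ne_top (κ : Kernel E F) [IsFiniteKernel κ]
    (ρ : Measure F) [IsFiniteMeasure ρ] : ⨆ y, tvDist (κ y) ρ ≠ ∞ := by
  have hbound : ⨆ y, tvDist (κ y) ρ ≤ κ.bound + ρ Set.univ := iSup_le fun y ↦
    (tvDist_le_univ_add_univ _ _).trans (add_le_add_left (κ.measure_le_bound y _) _)
  exact ne_top_of_le_ne_top (ENNReal.add_ne_top.mpr ⟨κ.bound_ne_top, measure_ne_top _ _⟩) hbound

section Integral

variable {G : Type*} [NormedAddCommGroup G] [NormedSpace ℝ G] {f : F → G}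

lemma norm_integral_kernel_sub_integral_le_iSup_tvDist {κ : Kernel E F} [IsFiniteKernel κ]
    {ρ : Measure F} [IsFiniteMeasure ρ] {y : E} (hκ : Integrable f (κ y)) (hρ : Integrable f ρ)
    (hf : ∀ z, ‖f z‖ ≤ 1) :
    ‖∫ z, f z ∂κ y - ∫ z, f z ∂ρ‖ ≤ (⨆ y, tvDist (κ y) ρ).toReal :=
  calc ‖∫ z, f z ∂κ y - ∫ z, f z ∂ρ‖
      ≤ 1 * (tvDist (κ y) ρ).toReal := norm_integral_sub_integral_le_mul_tvDist hκ hρ hf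
    _ ≤ (⨆ y, tvDist (κ y) ρ).toReal := by
        rw [one_mul]
        exact ENNReal.toReal_mono (iSup_tvDist_ne_top κ ρ) (le_iSup (fun y ↦ tvDist (κ y) ρ) y)

lemma integral_bind_kernel {κ : Kernel E F} {μ : Measure E} (hf : Integrable f (κ ∘ₘ μ)) :
    ∫ z, f z ∂(κ ∘ₘ μ) = ∫ y, ∫ z, f z ∂κ y ∂μ := by
  rw [Measure.comp_eq_comp_const_apply] at hf ⊢
  rw [Kernel.integral_comp hf, Kernel.const_apply]

end Integral

lemma tvDist_bind_le_mul_iSup_tvDist (κ : Kernel E F) [IsFiniteKernel κ]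
    (μ ν : Measure E) [IsFiniteMeasure μ] [IsFiniteMeasure ν] (hμν : μ Set.univ = ν Set.univ)
    (ρ : Measure F) [IsFiniteMeasure ρ] :
    tvDist (κ ∘ₘ μ) (κ ∘ₘ ν) ≤ tvDist μ ν * ⨆ y, tvDist (κ y) ρ := by
  obtain ⟨f, hf, hf_norm, hf_eq⟩ := exists_integral_sub_integral_eq_tvDist (κ ∘ₘ μ) (κ ∘ₘ ν)
  have hf_int (η : Measure F) [IsFiniteMeasure η] : Integrable f η :=
    .of_bound hf.aestronglyMeasurable 1 (ae_of_all _ hf_norm)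
  let g (y : E) : ℝ := ∫ z, f z ∂κ y - ∫ z, f z ∂ρ
  have hg : StronglyMeasurable g :=
    hf.stronglyMeasurable.integral_kernel.sub stronglyMeasurable_const
  have hg_norm (y : E) : ‖g y‖ ≤ (⨆ y, tvDist (κ y) ρ).toReal :=
    norm_integral_kernel_sub_integral_le_iSup_tvDist (hf_int _) (hf_int ρ) hf_norm
  have hg_int (η : Measure E) [IsFiniteMeasure η] : Integrable g η :=
    .of_bound hg.aestronglyMeasurable _ (ae_of_all _ hg_norm)
  have integral_bind_eq (η : Measure E) [IsFiniteMeasure η] :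
      ∫ z, f z ∂(κ ∘ₘ η) = ∫ y, g y ∂η + η.real Set.univ * ∫ z, f z ∂ρ := by
    rw [integral_bind_kernel (hf_int _), ← smul_eq_mul, ← integral_const,
      ← integral_add (hg_int η) (integrable_const _)]
    simp only [g, sub_add_cancel]
  have hmass : μ.real Set.univ = ν.real Set.univ := congrArg ENNReal.toReal hμν
  rw [← ENNReal.toReal_le_toReal (tvDist_ne_top _ _)
    (ENNReal.mul_ne_top (tvDist_ne_top _ _) (iSup_tvDist_ne_top κ ρ)), ENNReal.toReal_mul]
  calc (tvDist (κ ∘ₘ μ) (κ ∘ₘ ν)).toReal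
      = ∫ y, g y ∂μ - ∫ y, g y ∂ν := by
        rw [← hf_eq, integral_bind_eq, integral_bind_eq, hmass, add_sub_add_right_eq_sub]
    _ ≤ (⨆ y, tvDist (κ y) ρ).toReal * (tvDist μ ν).toReal :=
        (le_abs_self _).trans
          (norm_integral_sub_integral_le_mul_tvDist (hg_int μ) (hg_int ν) hg_norm)
    _ = (tvDist μ ν).toReal * (⨆ y, tvDist (κ y) ρ).toReal := mul_comm _ _

theorem tvDist_comp_le_general
    (κ₁ : Kernel X E) (κ₂ : Kernel E F) [IsFiniteKernel κ₁] [IsFiniteKernel κ₂]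
    (π : Measure E) [IsFiniteMeasure π] (hmass : ∀ x, κ₁ x Set.univ = π Set.univ)
    (ρ : Measure F) [IsFiniteMeasure ρ] :
    ⨆ x, tvDist ((κ₂ ∘ₖ κ₁) x) (κ₂ ∘ₘ π) ≤
      (⨆ x, tvDist (κ₁ x) π) * ⨆ y, tvDist (κ₂ y) ρ := by
  rw [ENNReal.iSup_mul]
  exact iSup_mono fun x ↦ tvDist_bind_le_mul_iSup_tvDist κ₂ (κ₁ x) π (hmass x) ρ

end Kernel

/-- Submultiplicativity of the uniform total variation distance to stationarity
(Section 1): if `π` is invariant for the Markov kernel `κ₂`, then the composition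
`κ₁⊚κ₂` (first `κ₁`, then `κ₂`) satisfies
`sup_x ‖(κ₁⊚κ₂)(x,·) - π‖_Var ≤ (sup_x ‖κ₁(x,·) - π‖_Var)·(sup_y ‖κ₂(y,·) - π‖_Var)`. -/
theorem tvDist_comp_le
    {E : Type*} [MeasurableSpace E]
    (κ₁ κ₂ : Kernel E E) [IsMarkovKernel κ₁] [IsMarkovKernel κ₂]
    (π : Measure E) [IsProbabilityMeasure π]
    (hinv : ∀ A : Set E, MeasurableSet A → ∫⁻ y, κ₂ y A ∂π = π A) :
    ⨆ x, tvDist ((κ₂ ∘ₖ κ₁) x) π ≤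
      (⨆ x, tvDist (κ₁ x) π) * ⨆ y, tvDist (κ₂ y) π := by
  have hbind : κ₂ ∘ₘ π = π := Measure.ext fun A hA ↦ by
    rw [Measure.bind_apply hA κ₂.aemeasurable, hinv A hA]
  have hmass (x : E) : κ₁ x Set.univ = π Set.univ := by rw [measure_univ, measure_univ]
  simpa only [hbind] using tvDist_comp_le_general κ₁ κ₂ π hmass π
end

section
/- Let (E, d) be a metric space with Borel σ-algebra, π a probability measure on E, and κ a Markov kernel on E such that π is invariant for κ (∫ κ(y, A) π(dy) = π(A) for all Borel A) and κ has a jointly measurable nonnegative density p with respect to π, i.e. κ(y, A) = ∫_A p(y,z) π(dz) for all y and Borel A. Fix x ∈ E, r > 0 and U ≥ 0, and suppose the Harnack-type inequality holds: for every bounded measurable f : E → [0,∞) and every y with d(x,y) ≤ r, (∫ f(z) κ(x, dz))² ≤ e^{U} · ∫ f(z)² κ(y, dz). If π(B̄(x,r)) > 0, where B̄(x,r) = {y : d(x,y) ≤ r}, then ∫ p(x,z)² π(dz) ≤ e^{U} / π(B̄(x,r)). -/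
open MeasureTheory ProbabilityTheory ENNReal

/-!
Averaging the Harnack inequality over the target point `y ∈ B` and using the invariance of `π` gives
`(∫ f dκₓ)² ≤ C / π(B) · ∫ f² dπ` for all bounded `f ≥ 0`. Thus `f ↦ ∫ f dκₓ = ∫ f q dπ` is bounded
on `L²(π)`, and by duality its density `q` has squared norm at most `C / π(B)`. To make the duality
step elementary, test with `f = min q n`: as `f² ≤ f q`, the finite number `I = ∫ f² dπ` satisfies
`I² ≤ C / π(B) · I`, so that `I ≤ C / π(B)`, and `n → ∞` concludes.
-/

open Filter Topology NNReal

section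

variable {α E : Type*} [MeasurableSpace α] [MeasurableSpace E]

/-- The dimension-free (power two) Harnack inequality with constant `C` between two measures.
For a Markov kernel `κ` it is the usual one from `x` to `y` when `μ = κ x` and `ν = κ y`. The test
functions are `ℝ≥0∞`-valued but bounded by a finite constant, so they are the bounded nonnegative
measurable functions. -/
def HarnackInequality (C : ℝ≥0∞) (μ ν : Measure E) : Prop :=
  ∀ f : E → ℝ≥0∞, Measurable f → (∃ M : ℝ≥0, ∀ z, f z ≤ M) →
    (∫⁻ z, f z ∂μ) ^ 2 ≤ C * ∫⁻ z, f z ^ 2 ∂ν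

theorem tendsto_lintegral_min_natCast_pow {f : E → ℝ≥0∞} (hf : Measurable f) (k : ℕ)
    (μ : Measure E) :
    Tendsto (fun n : ℕ => ∫⁻ z, min (f z) n ^ k ∂μ) atTop (𝓝 (∫⁻ z, f z ^ k ∂μ)) := by
  refine lintegral_tendsto_of_tendsto_of_monotone
    (fun n => ((hf.min measurable_const).pow_const k).aemeasurable)
    (.of_forall fun z m n hmn => by dsimp only; gcongr) (.of_forall fun z => ?_)
  simpa using ENNReal.Tendsto.pow (n := k)
    ((tendsto_const_nhds (x := f z)).min ENNReal.tendsto_nat_nhds_top)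

namespace HarnackInequality

variable {C : ℝ≥0∞} {μ ν ν' : Measure E}

theorem of_real
    (h : ∀ f : E → ℝ, Measurable f → (∀ z, 0 ≤ f z) → (∃ M : ℝ, ∀ z, f z ≤ M) →
      (∫⁻ z, ENNReal.ofReal (f z) ∂μ) ^ 2 ≤ C * ∫⁻ z, ENNReal.ofReal (f z ^ 2) ∂ν) :
    HarnackInequality C μ ν := by
  rintro f hf ⟨M, hM⟩
  lift f to E → ℝ≥0 using fun z => ne_top_of_le_ne_top coe_ne_top (hM z)
  rw [measurable_coe_nnreal_ennreal_iff] at hf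
  simpa [ENNReal.ofReal_pow] using h (fun z => f z) hf.coe_nnreal_real (fun z => (f z).coe_nonneg)
    ⟨M, fun z => NNReal.coe_le_coe.2 (coe_le_coe.1 (hM z))⟩

theorem mono_right (h : HarnackInequality C μ ν) (hν : ν ≤ ν') : HarnackInequality C μ ν' :=
  fun f hf hM => (h f hf hM).trans (by gcongr)

theorem comp_of_forall_mem {ρ : Measure α} {κ : Kernel α E} {B : Set α}
    (hB₀ : ρ B ≠ 0) (hB : ρ B ≠ ∞) (h : ∀ y ∈ B, HarnackInequality C μ (κ y)) :
    HarnackInequality (C / ρ B) μ (κ ∘ₘ ρ) := by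
  intro f hf hM
  have hf2 : Measurable fun z => f z ^ 2 := hf.pow_const 2
  rw [← ENNReal.mul_div_right_comm, ENNReal.le_div_iff_mul_le (.inl hB₀) (.inl hB)]
  calc (∫⁻ z, f z ∂μ) ^ 2 * ρ B
      = ∫⁻ _ in B, (∫⁻ z, f z ∂μ) ^ 2 ∂ρ := (setLIntegral_const B _).symm
    _ ≤ ∫⁻ y in B, C * ∫⁻ z, f z ^ 2 ∂(κ y) ∂ρ :=
        setLIntegral_mono (hf2.lintegral_kernel.const_mul C) fun y hy => h y hy f hf hM
    _ ≤ ∫⁻ y, C * ∫⁻ z, f z ^ 2 ∂(κ y) ∂ρ := setLIntegral_le_lintegral _ _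
    _ = C * ∫⁻ z, f z ^ 2 ∂(κ ∘ₘ ρ) := by
        rw [lintegral_const_mul C hf2.lintegral_kernel,
          Measure.lintegral_bind κ.aemeasurable hf2.aemeasurable]

theorem lintegral_sq_le {q : E → ℝ≥0∞} (hq : Measurable q) [IsFiniteMeasure (ν.withDensity q)]
    (h : HarnackInequality C (ν.withDensity q) ν) : ∫⁻ z, q z ^ 2 ∂ν ≤ C := by
  refine le_of_tendsto' (tendsto_lintegral_min_natCast_pow hq 2 ν) fun n => ?_
  set f : E → ℝ≥0∞ := fun z => min (q z) n
  set I := ∫⁻ z, f z ^ 2 ∂ν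
  have hf : Measurable f := hq.min measurable_const
  have hf_le : ∃ M : ℝ≥0, ∀ z, f z ≤ M := ⟨n, fun z => by simp [f]⟩
  have hI_le : I ≤ ∫⁻ z, f z ∂(ν.withDensity q) := by
    rw [lintegral_withDensity_eq_lintegral_mul ν hq hf]
    refine lintegral_mono fun z => ?_
    calc f z ^ 2 = f z * f z := sq (f z)
      _ ≤ q z * f z := by gcongr; exact min_le_left _ _
  have hI : I ≠ ∞ := ne_top_of_le_ne_top
    (IsFiniteMeasure.lintegral_lt_top_of_bounded_to_ennreal _ hf_le).ne hI_le
  have hI_sq : I * I ≤ C * I := calc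
    I * I = I ^ 2 := (sq I).symm
    _ ≤ (∫⁻ z, f z ∂(ν.withDensity q)) ^ 2 := by gcongr
    _ ≤ C * I := h f hf hf_le
  rcases eq_or_ne I 0 with hI₀ | hI₀
  · exact hI₀.trans_le zero_le
  · exact (ENNReal.mul_le_mul_iff_left hI₀ hI).1 hI_sq

end HarnackInequality

theorem density_L2_bound_of_harnack_general {π : Measure E} {κ : Kernel E E} (hπ : κ ∘ₘ π ≤ π)
    {x : E} [IsFiniteMeasure (κ x)] {q : E → ℝ≥0∞} (hq : Measurable q)
    (hκx : κ x = π.withDensity q) {B : Set E} (hB₀ : π B ≠ 0) (hB : π B ≠ ∞) {C : ℝ≥0∞}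
    (harnack : ∀ y ∈ B, HarnackInequality C (κ x) (κ y)) :
    ∫⁻ z, q z ^ 2 ∂π ≤ C / π B := by
  have : IsFiniteMeasure (π.withDensity q) := hκx ▸ inferInstance
  have averaged : HarnackInequality (C / π B) (κ x) π :=
    (HarnackInequality.comp_of_forall_mem hB₀ hB harnack).mono_right hπ
  exact (hκx ▸ averaged).lintegral_sq_le hq

end

/-- Abstract content of Lemmas 3.4 and 3.7: a dimension-free Harnack inequality for a
`π`-invariant Markov kernel `κ` with density `p` w.r.t. `π` implies the `L²(π)` bound
`∫ p(x,z)² π(dz) ≤ e^U / π(B̄(x,r))`. -/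
theorem density_L2_bound_of_harnack
    {E : Type*} [MetricSpace E] [MeasurableSpace E] [BorelSpace E]
    (π : Measure E) [IsProbabilityMeasure π]
    (κ : Kernel E E) [IsMarkovKernel κ]
    (hinv : ∀ A : Set E, MeasurableSet A → ∫⁻ y, κ y A ∂π = π A)
    (p : E → E → ℝ) (hp : Measurable (Function.uncurry p)) (hp0 : ∀ y z, 0 ≤ p y z)
    (hdens : ∀ (y : E) (A : Set E), MeasurableSet A →
      κ y A = ∫⁻ z in A, ENNReal.ofReal (p y z) ∂π)
    (x : E) (r : ℝ) (hr : 0 < r) (U : ℝ) (hU : 0 ≤ U)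
    (harnack : ∀ f : E → ℝ, Measurable f → (∀ z, 0 ≤ f z) → (∃ C : ℝ, ∀ z, f z ≤ C) →
      ∀ y : E, dist x y ≤ r →
        (∫⁻ z, ENNReal.ofReal (f z) ∂(κ x)) ^ 2 ≤
          ENNReal.ofReal (Real.exp U) * ∫⁻ z, ENNReal.ofReal (f z ^ 2) ∂(κ y))
    (hball : 0 < π (Metric.closedBall x r)) :
    ∫⁻ z, ENNReal.ofReal (p x z ^ 2) ∂π ≤
      ENNReal.ofReal (Real.exp U) / π (Metric.closedBall x r) := by
  have hπ : κ ∘ₘ π = π :=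
    Measure.ext fun A hA => (Measure.bind_apply hA κ.aemeasurable).trans (hinv A hA)
  have hκx : κ x = π.withDensity fun z => ENNReal.ofReal (p x z) :=
    Measure.ext fun A hA => (hdens x A hA).trans (withDensity_apply _ hA).symm
  have hxy : ∀ y ∈ Metric.closedBall x r,
      HarnackInequality (ENNReal.ofReal (Real.exp U)) (κ x) (κ y) := fun y hy =>
    .of_real fun f hf hf0 hM => harnack f hf hf0 hM y (Metric.mem_closedBall'.1 hy)
  simpa only [ENNReal.ofReal_pow (hp0 x _)] using density_L2_bound_of_harnack_general
    hπ.le hp.of_uncurry_left.ennreal_ofReal hκx hball.ne' (measure_ne_top π _) hxy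
end
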